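/- Let n ≥ 5 with n ≡ 1 (mod 4) or n ≡ 2 (mod 4). Then the cycle C_n is not graceful, while every proper connected subgraph of C_n (in particular, the path obtained by deleting any single edge of C_n) is graceful; that is, C_n is critically non-graceful. -/

import Mathlib

/-- The induced edge label `|φ(u) − φ(v)|` of an edge, as a function on `Sym2 V`. -/
def edgeLabel {V : Type*} (φ : V → ℕ) : Sym2 V → ℕ :=
  Sym2.lift ⟨fun u v => Nat.dist (φ u) (φ v), fun u v => Nat.dist_comm (φ u) (φ v)⟩

/-- `φ` is a graceful labeling of the graph `G` with `q` edges: it is injective,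
takes values in `{0, 1, ..., q}`, and the induced edge labels `|φ(u) − φ(v)|`
form exactly the set `{1, 2, ..., q}`, each value occurring once. -/
def IsGracefulLabeling {V : Type*} (G : SimpleGraph V) (φ : V → ℕ) : Prop :=
  Function.Injective φ ∧
  (∀ v, φ v ≤ Nat.card G.edgeSet) ∧
  Set.InjOn (edgeLabel φ) G.edgeSet ∧
  edgeLabel φ '' G.edgeSet = Set.Icc 1 (Nat.card G.edgeSet)

/-- A graph is graceful if it admits a graceful labeling. -/
def IsGraceful {V : Type*} (G : SimpleGraph V) : Prop :=
  ∃ φ : V → ℕ, IsGracefulLabeling G φ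

/-!
Reducing labels modulo 2 turns `|φ(u) − φ(v)|` into `φ(u) + φ(v)`, so the sum of all edge labels
has the parity of `∑ v, deg(v) φ(v)`. If all degrees are even, then `1 + ⋯ + q = q (q + 1) / 2` must
be even, which rules out `q ≡ 1, 2 (mod 4)`; this is Rosa's parity obstruction.

A proper connected subgraph of a cycle misses an edge, so it embeds in the path obtained by cutting
the cycle there, and being connected it is itself a path. Paths carry the zigzag labeling
`0, n - 1, 1, n - 2, …`, whose successive differences are `n - 1, n - 2, …, 1`.
-/

open Finset SimpleGraph

section Labelings

variable {V W : Type*} {G : SimpleGraph V} {G' : SimpleGraph W}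

@[simp]
lemma edgeLabel_mk (φ : V → ℕ) (u v : V) : edgeLabel φ s(u, v) = Nat.dist (φ u) (φ v) := rfl

lemma edgeLabel_map (φ : W → ℕ) (f : V → W) (e : Sym2 V) :
    edgeLabel φ (e.map f) = edgeLabel (φ ∘ f) e := by
  induction e with | _ u v => rfl

lemma isGracefulLabeling_of_image_eq_Icc {φ : V → ℕ} {q : ℕ} (hφ : φ.Injective)
    (hle : ∀ v, φ v ≤ q) (hinj : Set.InjOn (edgeLabel φ) G.edgeSet)
    (himage : edgeLabel φ '' G.edgeSet = Set.Icc 1 q) : IsGracefulLabeling G φ := by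
  have hcard : Nat.card G.edgeSet = q := by
    rw [Nat.card_coe_set_eq, ← hinj.ncard_image, himage, Set.ncard_eq_toFinset_card']
    simp
  refine ⟨hφ, ?_, hinj, ?_⟩ <;> rwa [hcard]

lemma IsGracefulLabeling.comp_iso {φ : W → ℕ} (hφ : IsGracefulLabeling G' φ) (f : G ≃g G') :
    IsGracefulLabeling G (φ ∘ f) := by
  obtain ⟨hφinj, hle, hinj, himage⟩ := hφ
  have hlabel : edgeLabel (φ ∘ f) = edgeLabel φ ∘ Sym2.map f :=
    funext fun e ↦ (edgeLabel_map φ f e).symm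
  have hedges : Sym2.map f '' G.edgeSet = G'.edgeSet := by
    ext e
    refine ⟨?_, fun he ↦ ⟨f.symm.mapEdgeSet ⟨e, he⟩, Subtype.coe_prop _, ?_⟩⟩
    · rintro ⟨e, he, rfl⟩
      exact (f.mapEdgeSet ⟨e, he⟩).2
    · exact congrArg Subtype.val (f.mapEdgeSet.apply_symm_apply ⟨e, he⟩)
  refine isGracefulLabeling_of_image_eq_Icc (hφinj.comp f.injective) (fun v ↦ hle (f v)) ?_ ?_
  · rw [hlabel]
    exact (hedges ▸ hinj).comp (Sym2.map.injective f.injective).injOn (Set.mapsTo_image _ _)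
  · rw [hlabel, Set.image_comp, hedges, himage]

lemma IsGraceful.of_iso (h : IsGraceful G') (f : G ≃g G') : IsGraceful G :=
  let ⟨φ, hφ⟩ := h
  ⟨φ ∘ f, hφ.comp_iso f⟩

end Labelings

section ParityObstruction

variable {V : Type*} {G : SimpleGraph V}

lemma sum_edgeFinset_sum_toFinset [Fintype V] [DecidableEq V] [DecidableRel G.Adj]
    {M : Type*} [AddCommMonoid M] (f : V → M) :
    ∑ e ∈ G.edgeFinset, ∑ v ∈ e.toFinset, f v = ∑ v, G.degree v • f v := by
  calc ∑ e ∈ G.edgeFinset, ∑ v ∈ e.toFinset, f v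
      = ∑ v, ∑ _ ∈ G.incidenceFinset v, f v := by
        refine sum_comm' fun _ _ ↦ ?_
        simp [incidenceFinset_eq_filter]
    _ = ∑ v, G.degree v • f v := by simp

lemma even_edgeLabel_add_sum_toFinset [DecidableEq V] (φ : V → ℕ) {e : Sym2 V} (he : ¬ e.IsDiag) :
    Even (edgeLabel φ e + ∑ v ∈ e.toFinset, φ v) := by
  induction e with
  | _ u v =>
    rw [Sym2.toFinset_mk_eq, sum_pair (by simpa using he), edgeLabel_mk, Nat.dist, Nat.even_iff]
    lia

lemma even_sum_edgeLabel_of_even_degree [Fintype V] [DecidableRel G.Adj]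
    (hdeg : ∀ v, Even (G.degree v)) (φ : V → ℕ) : Even (∑ e ∈ G.edgeFinset, edgeLabel φ e) := by
  classical
  have hvertices : Even (∑ e ∈ G.edgeFinset, ∑ v ∈ e.toFinset, φ v) := by
    rw [sum_edgeFinset_sum_toFinset]
    exact even_sum _ fun v _ ↦ (hdeg v).mul_right _
  refine (Nat.even_add.mp ?_).mpr hvertices
  rw [← sum_add_distrib]
  exact even_sum _ fun e he ↦
    even_edgeLabel_add_sum_toFinset φ (G.not_isDiag_of_mem_edgeFinset he)

lemma IsGracefulLabeling.sum_edgeLabel_mul_two [Fintype G.edgeSet] {φ : V → ℕ}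
    (hφ : IsGracefulLabeling G φ) :
    (∑ e ∈ G.edgeFinset, edgeLabel φ e) * 2 = (#G.edgeFinset + 1) * #G.edgeFinset := by
  obtain ⟨-, -, hinj, himage⟩ := hφ
  rw [Nat.card_eq_fintype_card, ← edgeFinset_card] at himage
  have himage_finset : G.edgeFinset.image (edgeLabel φ) = Icc 1 #G.edgeFinset := by
    rw [← coe_inj]
    simpa using himage
  calc (∑ e ∈ G.edgeFinset, edgeLabel φ e) * 2
      = (∑ k ∈ Icc 1 #G.edgeFinset, k) * 2 := by
        rw [← himage_finset, sum_image (by simpa using hinj)]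
    _ = (∑ k ∈ range (#G.edgeFinset + 1), k) * 2 := by
        rw [range_eq_Ico, sum_eq_sum_Ico_succ_bot (Nat.succ_pos _), zero_add, zero_add]
        rfl
    _ = (#G.edgeFinset + 1) * #G.edgeFinset := sum_range_id_mul_two _

theorem not_isGraceful_of_even_degree [Fintype V] [DecidableRel G.Adj]
    (hdeg : ∀ v, Even (G.degree v)) (hq : #G.edgeFinset % 4 = 1 ∨ #G.edgeFinset % 4 = 2) :
    ¬ IsGraceful G := by
  rintro ⟨φ, hφ⟩
  obtain ⟨m, hm⟩ := even_sum_edgeLabel_of_even_degree hdeg φ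
  have hfour : 4 * m = (#G.edgeFinset + 1) * #G.edgeFinset := by
    rw [← hφ.sum_edgeLabel_mul_two, hm]
    ring
  have hmod := congrArg (· % 4) hfour
  rcases hq with hq | hq <;> simp [Nat.mul_mod, Nat.add_mod, hq] at hmod

end ParityObstruction

section Paths

/-- The zigzag labeling `0, n - 1, 1, n - 2, …` of the successive vertices of `pathGraph n`: vertex
`2j` gets `j` and vertex `2j + 1` gets `n - 1 - j`. -/
def zigzagLabel (n : ℕ) (i : Fin n) : ℕ :=
  if i.val % 2 = 0 then i.val / 2 else n - 1 - i.val / 2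

variable {n : ℕ}

lemma zigzagLabel_injective : (zigzagLabel n).Injective := by
  intro i j hij
  unfold zigzagLabel at hij
  split_ifs at hij <;> lia

lemma edgeLabel_zigzagLabel {i j : Fin n} (hij : i.val + 1 = j.val) :
    edgeLabel (zigzagLabel n) s(i, j) = n - 1 - i := by
  simp only [edgeLabel_mk, Nat.dist, zigzagLabel]
  split_ifs <;> lia

lemma exists_eq_mk_of_mem_edgeSet_pathGraph {e : Sym2 (Fin n)} (he : e ∈ (pathGraph n).edgeSet) :
    ∃ i j : Fin n, i.val + 1 = j.val ∧ e = s(i, j) := by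
  induction e with
  | _ u v =>
    rcases pathGraph_adj.mp he with h | h
    · exact ⟨u, v, h, rfl⟩
    · exact ⟨v, u, h, Sym2.eq_swap⟩

lemma isGracefulLabeling_zigzagLabel (n : ℕ) :
    IsGracefulLabeling (pathGraph n) (zigzagLabel n) := by
  refine isGracefulLabeling_of_image_eq_Icc (q := n - 1) zigzagLabel_injective ?_ ?_ ?_
  · intro i
    unfold zigzagLabel
    split_ifs <;> lia
  · intro e he e' he' hlabel
    obtain ⟨i, j, hij, rfl⟩ := exists_eq_mk_of_mem_edgeSet_pathGraph he
    obtain ⟨i', j', hij', rfl⟩ := exists_eq_mk_of_mem_edgeSet_pathGraph he'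
    rw [edgeLabel_zigzagLabel hij, edgeLabel_zigzagLabel hij'] at hlabel
    obtain rfl : i = i' := by lia
    obtain rfl : j = j' := by lia
    rfl
  · ext k
    constructor
    · rintro ⟨e, he, rfl⟩
      obtain ⟨i, j, hij, rfl⟩ := exists_eq_mk_of_mem_edgeSet_pathGraph he
      rw [edgeLabel_zigzagLabel hij, Set.mem_Icc]
      lia
    · rintro ⟨hk₁, hk₂⟩
      let i : Fin n := ⟨n - 1 - k, by lia⟩
      let j : Fin n := ⟨n - k, by lia⟩
      have hij : i.val + 1 = j.val := by simp only [i, j]; lia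
      refine ⟨s(i, j), pathGraph_adj.mpr (.inl hij), ?_⟩
      rw [edgeLabel_zigzagLabel hij]
      simp only [i]
      lia

theorem isGraceful_pathGraph (n : ℕ) : IsGraceful (pathGraph n) :=
  ⟨zigzagLabel n, isGracefulLabeling_zigzagLabel n⟩

variable {V : Type*} {G : SimpleGraph V}

lemma exists_adj_of_hom_pathGraph (hG : G.Preconnected) (f : G →g pathGraph n) {x y : V} {k : ℕ}
    (hx : (f x).val ≤ k) (hy : k < (f y).val) :
    ∃ u v, G.Adj u v ∧ (f u).val = k ∧ (f v).val = k + 1 := by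
  obtain ⟨p⟩ := hG x y
  obtain ⟨d, -, hfst, hsnd⟩ :=
    p.exists_boundary_dart {v | (f v).val ≤ k} hx (not_le.mpr hy)
  have hadj := pathGraph_adj.mp (f.map_adj d.adj)
  simp only [Set.mem_ofPred_eq] at hfst hsnd
  exact ⟨d.fst, d.snd, d.adj, by lia, by lia⟩

lemma adj_iff_pathGraph_adj_of_injective_hom (hG : G.Preconnected) (f : G →g pathGraph n)
    (hf : Function.Injective f) {u v : V} : G.Adj u v ↔ (pathGraph n).Adj (f u) (f v) := by
  have adj_of_succ {u v : V} (huv : (f u).val + 1 = (f v).val) : G.Adj u v := by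
    obtain ⟨u', v', hadj, hu', hv'⟩ :=
      exists_adj_of_hom_pathGraph hG f (le_refl (f u).val) (y := v) (by lia)
    obtain rfl : u' = u := hf (Fin.ext hu')
    obtain rfl : v' = v := hf (Fin.ext (hv'.trans huv))
    exact hadj
  refine ⟨f.map_adj, fun huv ↦ ?_⟩
  exact (pathGraph_adj.mp huv).elim adj_of_succ fun hvu ↦ (adj_of_succ hvu).symm

lemma exists_iso_pathGraph_of_injective_hom (hG : G.Connected) (f : G →g pathGraph n)
    (hf : Function.Injective f) : ∃ m, Nonempty (G ≃g pathGraph m) := by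
  have := hG.nonempty
  have := Finite.of_injective f hf
  obtain ⟨x, hx⟩ := Finite.exists_min f
  obtain ⟨y, hy⟩ := Finite.exists_max f
  simp only [Fin.le_def] at hx hy
  let g (v : V) : Fin ((f y).val - (f x).val + 1) := ⟨(f v).val - (f x).val, by grind⟩
  have hg (v : V) : (g v).val + (f x).val = (f v).val := Nat.sub_add_cancel (hx v)
  have hinj : g.Injective := fun u v huv ↦ hf (Fin.ext (by rw [← hg u, ← hg v, huv]))
  have hsurj : g.Surjective := by
    intro k
    rcases Nat.eq_zero_or_pos k.val with hk | hk
    · exact ⟨x, Fin.ext (by grind)⟩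
    · obtain ⟨-, v, -, -, hv⟩ := exists_adj_of_hom_pathGraph hG.preconnected f
        (x := x) (y := y) (k := (f x).val + k.val - 1) (by lia) (by lia)
      exact ⟨v, Fin.ext (by grind)⟩
  have hadj {u v : V} : (pathGraph _).Adj (g u) (g v) ↔ G.Adj u v := by
    rw [adj_iff_pathGraph_adj_of_injective_hom hG.preconnected f hf, pathGraph_adj, pathGraph_adj,
      ← hg u, ← hg v]
    lia
  exact ⟨_, ⟨⟨Equiv.ofBijective g ⟨hinj, hsurj⟩, hadj⟩⟩⟩

end Paths

section Cycles

variable {n : ℕ}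

lemma degree_cycleGraph (hn : 3 ≤ n) (v : Fin n) : (cycleGraph n).degree v = 2 := by
  obtain ⟨m, rfl⟩ := Nat.exists_eq_add_of_le' hn
  exact cycleGraph_degree_three_le

lemma card_edgeFinset_cycleGraph (hn : 3 ≤ n) : #(cycleGraph n).edgeFinset = n := by
  have hsum := (cycleGraph n).sum_degrees_eq_twice_card_edges
  simp only [degree_cycleGraph hn, sum_const, card_univ, Fintype.card_fin, smul_eq_mul] at hsum
  lia

theorem not_isGraceful_cycleGraph (hn : 3 ≤ n) (h : n % 4 = 1 ∨ n % 4 = 2) :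
    ¬ IsGraceful (cycleGraph n) := by
  refine not_isGraceful_of_even_degree (fun v ↦ ?_) ?_
  · rw [degree_cycleGraph hn]
    exact even_two
  · rwa [card_edgeFinset_cycleGraph hn]

section Unrolling

variable [NeZero n]

lemma eq_add_one_or_eq_add_one_of_cycleGraph_adj {u v : Fin n} (huv : (cycleGraph n).Adj u v) :
    u = v + 1 ∨ v = u + 1 := by
  have eq_add_one {a b : Fin n} (hab : (a - b).val = 1) : a = b + 1 := by
    rw [← sub_eq_iff_eq_add']
    refine Fin.ext ?_
    rw [hab, Fin.val_one', Nat.mod_eq_of_lt (hab ▸ (a - b).isLt)]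
  exact (cycleGraph_adj'.mp huv).imp eq_add_one eq_add_one

lemma exists_not_adj_add_one_of_ne_top {H : (cycleGraph n).Subgraph} (hH : H ≠ ⊤) :
    ∃ i, ¬ H.Adj i (i + 1) := by
  contrapose! hH with hall
  refine Subgraph.ext (Set.eq_univ_of_forall fun i ↦ (hall i).fst_mem) ?_
  ext u v
  refine ⟨Subgraph.Adj.adj_sub, fun huv ↦ ?_⟩
  rcases eq_add_one_or_eq_add_one_of_cycleGraph_adj huv with rfl | rfl
  · exact (hall v).symm
  · exact hall u

lemma val_add_one_of_add_one_ne_zero {a : Fin n} (ha : a + 1 ≠ 0) :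
    (a + 1).val = a.val + 1 := by
  refine Fin.val_add_one_of_lt' (lt_of_le_of_ne a.isLt fun heq ↦ ha (Fin.ext ?_))
  simp [Fin.val_add, heq]

lemma val_sub_add_one_of_ne {i u : Fin n} (hu : u ≠ i) :
    (u - (i + 1)).val + 1 = (u + 1 - (i + 1)).val := by
  have hne : u - (i + 1) + 1 ≠ 0 := by
    rwa [sub_add_eq_sub_sub, sub_add_cancel, sub_ne_zero]
  rw [← sub_add_eq_add_sub, val_add_one_of_add_one_ne_zero hne]

/-- The embedding of a subgraph of the cycle that avoids the edge `{i, i + 1}` into the path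
obtained by cutting the cycle at that edge, read off starting from the vertex `i + 1`. -/
def unrollHom (H : (cycleGraph n).Subgraph) {i : Fin n} (hi : ¬ H.Adj i (i + 1)) :
    H.coe →g pathGraph n where
  toFun v := v.val - (i + 1)
  map_rel' {u v} huv := by
    obtain ⟨u, hu⟩ := u
    obtain ⟨v, hv⟩ := v
    replace huv : H.Adj u v := huv
    rw [pathGraph_adj]
    rcases eq_add_one_or_eq_add_one_of_cycleGraph_adj huv.adj_sub with rfl | rfl
    · exact .inr (val_sub_add_one_of_ne fun h ↦ hi (h ▸ huv.symm))
    · exact .inl (val_sub_add_one_of_ne fun h ↦ hi (h ▸ huv))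

lemma unrollHom_injective (H : (cycleGraph n).Subgraph) {i : Fin n} (hi : ¬ H.Adj i (i + 1)) :
    Function.Injective (unrollHom H hi) :=
  fun _ _ huv ↦ Subtype.ext (sub_left_injective huv)

end Unrolling

theorem isGraceful_of_connected_subgraph_cycleGraph {H : (cycleGraph n).Subgraph}
    (hH : H ≠ ⊤) (hconn : H.coe.Connected) : IsGraceful H.coe := by
  have := hconn.nonempty.some.val.neZero
  obtain ⟨i, hi⟩ := exists_not_adj_add_one_of_ne_top hH
  obtain ⟨m, ⟨f⟩⟩ :=
    exists_iso_pathGraph_of_injective_hom hconn (unrollHom H hi) (unrollHom_injective H hi)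
  exact (isGraceful_pathGraph m).of_iso f

end Cycles

/-- For `n ≥ 5` with `n ≡ 1` or `2 (mod 4)`, the cycle `C_n` is not
graceful while every proper connected subgraph of it is graceful: `C_n` is
critically non-graceful. -/
theorem cycleGraph_critically_non_graceful (n : ℕ) (hn : 5 ≤ n)
    (h : n % 4 = 1 ∨ n % 4 = 2) :
    ¬ IsGraceful (SimpleGraph.cycleGraph n) ∧
    ∀ H : (SimpleGraph.cycleGraph n).Subgraph,
      H ≠ ⊤ → H.coe.Connected → IsGraceful H.coe :=
  ⟨not_isGraceful_cycleGraph (by lia) h, fun _ ↦ isGraceful_of_connected_subgraph_cycleGraph⟩
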